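/- Suppose: (i) the model is parameter uniformly relevant (PUR): there exist d, k > 0 such that for all |θ| > k, sgn(θ)·(∫_ℝ x·π(x | θ) dx − y) ≥ d; (ii) the centred parametrisation is geometrically tight in parameter (GTIP): there exist a, b > 0 such that for every θ ∈ ℝ and every t ≥ 0, ∫_{{x : |x| > t}} π(x | θ) dx ≤ a·e^{−b·t}. Then, writing x̃ = x − θ for the non-centred missing datum (so that y − x̃ = y − x + θ), there exists α₀ > 0 such that for every α ∈ (0, α₀): for all θ > k, ∫_ℝ e^{α(y − x + θ)} π(x | θ) dx ≤ e^{α θ}(1 − α d/2), and for all θ < −k, ∫_ℝ e^{−α(y − x + θ)} π(x | θ) dx ≤ e^{−α θ}(1 − α d/2). -/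

import Mathlib

open MeasureTheory Filter Set

noncomputable section

/-- Joint (unnormalised posterior) density `f_θ(x) = f₁(y - x) · f₂(x - θ)`. -/
def fjoint (f₁ f₂ : ℝ → ℝ) (y θ x : ℝ) : ℝ := f₁ (y - x) * f₂ (x - θ)

/-- Normalising constant `c_θ = ∫ f_θ(x) dx`. -/
def cnorm (f₁ f₂ : ℝ → ℝ) (y θ : ℝ) : ℝ := ∫ x, fjoint f₁ f₂ y θ x

/-- Conditional posterior density `π(x | θ) = f_θ(x)/c_θ`. -/
def post (f₁ f₂ : ℝ → ℝ) (y θ x : ℝ) : ℝ := fjoint f₁ f₂ y θ x / cnorm f₁ f₂ y θ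

/-- One-step transition density of the marginal Θ-chain of the centred Gibbs sampler:
`p(θ₀, θ₁) = (1/c_{θ₀}) ∫ f₂(x - θ₁) f_{θ₀}(x) dx`. -/
def gibbsTrans (f₁ f₂ : ℝ → ℝ) (y θ₀ θ₁ : ℝ) : ℝ :=
  (1 / cnorm f₁ f₂ y θ₀) * ∫ x, f₂ (x - θ₁) * fjoint f₁ f₂ y θ₀ x

/-- `n`-step transition density (for `n ≥ 1`; the value at `n = 0` is unused). -/
def gibbsTransN (f₁ f₂ : ℝ → ℝ) (y : ℝ) : ℕ → ℝ → ℝ → ℝ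
  | 0, _, _ => 0
  | 1, θ₀, θ₁ => gibbsTrans f₁ f₂ y θ₀ θ₁
  | (n + 2), θ₀, θ₁ => ∫ u, gibbsTransN f₁ f₂ y (n + 1) θ₀ u * gibbsTrans f₁ f₂ y u θ₁

/-!
The tail bound makes `∫ exp (c|x|) π(x | θ) dx` finite for `c < b`, uniformly in `θ`. Expanding to
second order, `∫ exp (t (y - x)) π(x | θ) dx ≤ 1 + t ∫ (y - x) π(x | θ) dx + O(t²)` with a constant
independent of `θ`; when `t` has the sign of `θ`, the linear term is at most `-|t| d`, and for small
`|t|` it absorbs the quadratic error at the cost of half its size.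
-/

section ExponentialMoments

open ProbabilityTheory

lemma integral_mul_exp_mul (c u : ℝ) :
    ∫ t in (0 : ℝ)..u, c * Real.exp (c * t) = Real.exp (c * u) - 1 := by
  rw [intervalIntegral.integral_const_mul, intervalIntegral.mul_integral_comp_mul_left,
    integral_exp, mul_zero, Real.exp_zero]

-- The power series are compared term by term: `|t| ^ n ≤ (t / c) ^ 2 * c ^ n` for `n ≥ 2`.
lemma exp_mul_le_one_add_add_sq_mul_exp {c t : ℝ} (hc : 0 < c) (ht : |t| ≤ c) (x : ℝ) :
    Real.exp (t * x) ≤ 1 + t * x + (t / c) ^ 2 * Real.exp (c * |x|) := by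
  have hasSum_remainder (u : ℝ) :
      HasSum (fun n : ℕ => u ^ (n + 2) / (n + 2).factorial) (Real.exp u - (1 + u)) := by
    have h := (hasSum_nat_add_iff' 2).2 (NormedSpace.expSeries_div_hasSum_exp u)
    simpa [Finset.sum_range_succ, ← Real.exp_eq_exp_ℝ] using h
  have term_le (n : ℕ) : (t * x) ^ (n + 2) / (n + 2).factorial ≤
      (t / c) ^ 2 * ((c * |x|) ^ (n + 2) / (n + 2).factorial) := by
    rw [← mul_div_assoc]
    gcongr
    calc (t * x) ^ (n + 2) ≤ (|t| * |x|) ^ (n + 2) := by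
          rw [← abs_mul, ← abs_pow]
          exact le_abs_self _
      _ = t ^ 2 * |t| ^ n * |x| ^ (n + 2) := by rw [mul_pow, pow_add |t|, sq_abs]; ring
      _ ≤ t ^ 2 * c ^ n * |x| ^ (n + 2) := by gcongr
      _ = (t / c) ^ 2 * (c * |x|) ^ (n + 2) := by field_simp; ring
  have remainder_le : Real.exp (t * x) - (1 + t * x) ≤
      (t / c) ^ 2 * (Real.exp (c * |x|) - (1 + c * |x|)) :=
    hasSum_le term_le (hasSum_remainder _) ((hasSum_remainder _).mul_left _)
  have : 0 ≤ (t / c) ^ 2 * (1 + c * |x|) := by positivity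
  linarith

variable {Ω : Type*} {mΩ : MeasurableSpace Ω} {μ : Measure Ω} {X : Ω → ℝ}

lemma integrable_of_integrable_exp_mul_abs {c : ℝ} (hc : 0 < c) (hX : AEMeasurable X μ)
    (hexp : Integrable (fun ω => Real.exp (c * |X ω|)) μ) : Integrable X μ := by
  refine (hexp.const_mul c⁻¹).mono' hX.aestronglyMeasurable (.of_forall fun ω => ?_)
  rw [Real.norm_eq_abs, le_inv_mul_iff₀ hc]
  linarith [Real.add_one_le_exp (c * |X ω|)]

lemma exp_mul_abs_sub_le {c : ℝ} (hc : 0 ≤ c) (x y : ℝ) :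
    Real.exp (c * |x - y|) ≤ Real.exp (c * |x|) * Real.exp (c * |y|) := by
  rw [← Real.exp_add, ← mul_add]
  gcongr
  exact abs_sub x y

lemma integrable_exp_mul_abs_const_sub {c : ℝ} (hc : 0 ≤ c) (hX : AEMeasurable X μ)
    (hexp : Integrable (fun ω => Real.exp (c * |X ω|)) μ) (y : ℝ) :
    Integrable (fun ω => Real.exp (c * |y - X ω|)) μ :=
  (hexp.const_mul (Real.exp (c * |y|))).mono' (by fun_prop) (.of_forall fun ω => by
    simpa only [Real.norm_eq_abs, Real.abs_exp] using exp_mul_abs_sub_le hc y (X ω))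

lemma integral_exp_mul_abs_const_sub_le {c : ℝ} (hc : 0 ≤ c)
    (hexp : Integrable (fun ω => Real.exp (c * |X ω|)) μ) (y : ℝ) :
    ∫ ω, Real.exp (c * |y - X ω|) ∂μ ≤ Real.exp (c * |y|) * ∫ ω, Real.exp (c * |X ω|) ∂μ := by
  rw [← integral_const_mul]
  exact integral_mono_of_nonneg (.of_forall fun _ => (Real.exp_pos _).le) (hexp.const_mul _)
    (.of_forall fun ω => exp_mul_abs_sub_le hc y (X ω))

lemma mgf_le_one_add_mul_integral_add [IsProbabilityMeasure μ] {c t : ℝ} (hc : 0 < c)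
    (ht : |t| ≤ c) (hX : AEMeasurable X μ)
    (hexp : Integrable (fun ω => Real.exp (c * |X ω|)) μ) :
    mgf X μ t ≤ 1 + t * ∫ ω, X ω ∂μ + (t / c) ^ 2 * ∫ ω, Real.exp (c * |X ω|) ∂μ := by
  have hlin : Integrable (fun ω => t * X ω) μ :=
    (integrable_of_integrable_exp_mul_abs hc hX hexp).const_mul t
  have haff : Integrable (fun ω => 1 + t * X ω) μ := (integrable_const 1).add hlin
  have hquad : Integrable (fun ω => (t / c) ^ 2 * Real.exp (c * |X ω|)) μ := hexp.const_mul _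
  calc mgf X μ t ≤ ∫ ω, (1 + t * X ω + (t / c) ^ 2 * Real.exp (c * |X ω|)) ∂μ :=
        integral_mono_of_nonneg (.of_forall fun _ => (Real.exp_pos _).le) (haff.add hquad)
          (.of_forall fun _ => exp_mul_le_one_add_add_sq_mul_exp hc ht _)
    _ = _ := by
        rw [integral_add haff hquad, integral_add (integrable_const 1) hlin]
        simp only [integral_const_mul, integral_const, probReal_univ, one_smul]

section ExponentialTail

variable {a b c : ℝ}

lemma ae_nonneg_exp_mul_sub_one (hc : 0 ≤ c) (hX_nonneg : 0 ≤ᵐ[μ] X) :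
    0 ≤ᵐ[μ] fun ω => Real.exp (c * X ω) - 1 :=
  hX_nonneg.mono fun _ hω => sub_nonneg.2 (Real.one_le_exp (mul_nonneg hc hω))

variable [IsFiniteMeasure μ]

lemma lintegral_exp_mul_sub_one_le_of_tail_le (ha : 0 ≤ a) (hc : 0 ≤ c) (hcb : c < b)
    (hX : AEMeasurable X μ) (hX_nonneg : 0 ≤ᵐ[μ] X)
    (htail : ∀ t, 0 ≤ t → μ.real {ω | t < X ω} ≤ a * Real.exp (-b * t)) :
    ∫⁻ ω, ENNReal.ofReal (Real.exp (c * X ω) - 1) ∂μ ≤ ENNReal.ofReal (a * c / (b - c)) := by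
  have hneg : -(b - c) < 0 := by linarith
  calc ∫⁻ ω, ENNReal.ofReal (Real.exp (c * X ω) - 1) ∂μ
      = ∫⁻ t in Ioi 0, μ {ω | t < X ω} * ENNReal.ofReal (c * Real.exp (c * t)) := by
        simp only [← integral_mul_exp_mul]
        exact lintegral_comp_eq_lintegral_meas_lt_mul μ hX_nonneg hX
          (fun t _ => Continuous.intervalIntegrable (by fun_prop) _ _)
          (.of_forall fun t => by positivity)
    _ ≤ ∫⁻ t in Ioi 0, ENNReal.ofReal (a * c * Real.exp (-(b - c) * t)) := by
        refine setLIntegral_mono (by fun_prop) fun t ht => ?_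
        rw [← ofReal_measureReal, ← ENNReal.ofReal_mul measureReal_nonneg]
        refine ENNReal.ofReal_le_ofReal ?_
        calc μ.real {ω | t < X ω} * (c * Real.exp (c * t))
            ≤ a * Real.exp (-b * t) * (c * Real.exp (c * t)) := by
              gcongr
              exact htail t (le_of_lt ht)
          _ = a * c * Real.exp (-(b - c) * t) := by
              rw [show -(b - c) * t = -b * t + c * t by ring, Real.exp_add]
              ring
    _ = ENNReal.ofReal (∫ t in Ioi 0, a * c * Real.exp (-(b - c) * t)) :=
        (ofReal_integral_eq_lintegral_ofReal ((integrableOn_exp_mul_Ioi hneg 0).const_mul _)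
          (.of_forall fun t => by positivity)).symm
    _ = ENNReal.ofReal (a * c / (b - c)) := by
        rw [integral_const_mul, integral_exp_mul_Ioi hneg, mul_zero, Real.exp_zero, neg_div_neg_eq,
          mul_one_div]

lemma integrable_exp_mul_of_tail_le (ha : 0 ≤ a) (hc : 0 ≤ c) (hcb : c < b)
    (hX : AEMeasurable X μ) (hX_nonneg : 0 ≤ᵐ[μ] X)
    (htail : ∀ t, 0 ≤ t → μ.real {ω | t < X ω} ≤ a * Real.exp (-b * t)) :
    Integrable (fun ω => Real.exp (c * X ω)) μ := by
  have hsub : Integrable (fun ω => Real.exp (c * X ω) - 1) μ :=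
    (lintegral_ofReal_ne_top_iff_integrable (by fun_prop)
      (ae_nonneg_exp_mul_sub_one hc hX_nonneg)).1
      (ne_top_of_le_ne_top ENNReal.ofReal_ne_top
        (lintegral_exp_mul_sub_one_le_of_tail_le ha hc hcb hX hX_nonneg htail))
  exact (hsub.add (integrable_const 1)).congr (.of_forall fun _ => sub_add_cancel _ _)

lemma integral_exp_mul_le_of_tail_le (ha : 0 ≤ a) (hc : 0 ≤ c) (hcb : c < b)
    (hX : AEMeasurable X μ) (hX_nonneg : 0 ≤ᵐ[μ] X)
    (htail : ∀ t, 0 ≤ t → μ.real {ω | t < X ω} ≤ a * Real.exp (-b * t)) :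
    ∫ ω, Real.exp (c * X ω) ∂μ ≤ μ.real univ + a * c / (b - c) := by
  have hsub : ∫ ω, (Real.exp (c * X ω) - 1) ∂μ ≤ a * c / (b - c) := by
    rw [integral_eq_lintegral_of_nonneg_ae (ae_nonneg_exp_mul_sub_one hc hX_nonneg) (by fun_prop)]
    exact ENNReal.toReal_le_of_le_ofReal (div_nonneg (mul_nonneg ha hc) (sub_pos.2 hcb).le)
      (lintegral_exp_mul_sub_one_le_of_tail_le ha hc hcb hX hX_nonneg htail)
  rw [integral_sub (integrable_exp_mul_of_tail_le ha hc hcb hX hX_nonneg htail)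
    (integrable_const 1), integral_const, smul_eq_mul, mul_one] at hsub
  linarith

end ExponentialTail

lemma mgf_const_sub_le_of_tail_le [IsProbabilityMeasure μ] {a b t : ℝ} (ha : 0 ≤ a) (hb : 0 < b)
    (ht : |t| ≤ b / 2) (hX : AEMeasurable X μ)
    (htail : ∀ s, 0 ≤ s → μ.real {ω | s < |X ω|} ≤ a * Real.exp (-b * s)) (y : ℝ) :
    mgf (fun ω => y - X ω) μ t ≤ 1 + t * (y - ∫ ω, X ω ∂μ) +
      (t / (b / 2)) ^ 2 * (Real.exp (b / 2 * |y|) * (1 + a)) := by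
  have hc : 0 < b / 2 := half_pos hb
  have hcb : b / 2 < b := half_lt_self hb
  have habs_nonneg : 0 ≤ᵐ[μ] fun ω => |X ω| := .of_forall fun _ => abs_nonneg _
  have hexp : Integrable (fun ω => Real.exp (b / 2 * |X ω|)) μ :=
    integrable_exp_mul_of_tail_le ha hc.le hcb (by fun_prop) habs_nonneg htail
  have hexp_le : ∫ ω, Real.exp (b / 2 * |X ω|) ∂μ ≤ 1 + a := by
    have h := integral_exp_mul_le_of_tail_le ha hc.le hcb (by fun_prop) habs_nonneg htail
    rwa [probReal_univ, sub_half, mul_div_cancel_right₀ a hc.ne'] at h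
  have hexp_shift_le : ∫ ω, Real.exp (b / 2 * |y - X ω|) ∂μ ≤
      Real.exp (b / 2 * |y|) * (1 + a) := by
    grw [integral_exp_mul_abs_const_sub_le hc.le hexp y, hexp_le]
  calc mgf (fun ω => y - X ω) μ t
      ≤ 1 + t * ∫ ω, (y - X ω) ∂μ + (t / (b / 2)) ^ 2 * ∫ ω, Real.exp (b / 2 * |y - X ω|) ∂μ :=
        mgf_le_one_add_mul_integral_add hc ht (by fun_prop)
          (integrable_exp_mul_abs_const_sub hc.le hX hexp y)
    _ ≤ 1 + t * (y - ∫ ω, X ω ∂μ) +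
        (t / (b / 2)) ^ 2 * (Real.exp (b / 2 * |y|) * (1 + a)) := by
        rw [integral_sub (integrable_const y) (integrable_of_integrable_exp_mul_abs hc hX hexp),
          integral_const, probReal_univ, one_smul]
        gcongr

lemma exists_forall_integral_exp_mul_sub_le {a b d : ℝ} (ha : 0 ≤ a) (hb : 0 < b) (hd : 0 < d)
    (y : ℝ) :
    ∃ α₀ > 0, ∀ (μ : Measure ℝ) [IsProbabilityMeasure μ],
      (∀ s, 0 ≤ s → μ.real {x | s < |x|} ≤ a * Real.exp (-b * s)) →
      ∀ t, |t| < α₀ → |t| * d ≤ t * ((∫ x, x ∂μ) - y) →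
        ∫ x, Real.exp (t * (y - x)) ∂μ ≤ 1 - |t| * d / 2 := by
  set K := Real.exp (b / 2 * |y|) * (1 + a) / (b / 2) ^ 2 with hK
  have hK_pos : 0 < K := by positivity
  refine ⟨min (b / 2) (d / 2 / K), by positivity, fun μ _ htail t ht hdrift => ?_⟩
  obtain ⟨ht_le, ht_lt⟩ := lt_min_iff.1 ht
  have herror : (t / (b / 2)) ^ 2 * (Real.exp (b / 2 * |y|) * (1 + a)) ≤ |t| * d / 2 :=
    calc (t / (b / 2)) ^ 2 * (Real.exp (b / 2 * |y|) * (1 + a)) = |t| * (|t| * K) := by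
          rw [← mul_assoc |t|, abs_mul_abs_self, hK]
          ring
      _ ≤ |t| * (d / 2) := by
          gcongr
          exact ((lt_div_iff₀ hK_pos).1 ht_lt).le
      _ = |t| * d / 2 := by ring
  have hmgf : ∫ x, Real.exp (t * (y - x)) ∂μ ≤ _ :=
    mgf_const_sub_le_of_tail_le ha hb ht_le.le aemeasurable_id htail y
  simp only [id] at hmgf
  linarith

end ExponentialMoments

section Density

variable {α : Type*} {mα : MeasurableSpace α} {μ : Measure α} {p : α → ℝ}

lemma isProbabilityMeasure_withDensity_ofReal (hp : 0 ≤ᵐ[μ] p) (hp_one : ∫ x, p x ∂μ = 1) :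
    IsProbabilityMeasure (μ.withDensity fun x => ENNReal.ofReal (p x)) := by
  have hp_int : Integrable p μ := .of_integral_ne_zero (by rw [hp_one]; exact one_ne_zero)
  constructor
  rw [withDensity_apply _ .univ, Measure.restrict_univ,
    ← ofReal_integral_eq_lintegral_ofReal hp_int hp, hp_one, ENNReal.ofReal_one]

lemma integral_withDensity_ofReal (hp_meas : AEMeasurable p μ) (hp : 0 ≤ᵐ[μ] p) (g : α → ℝ) :
    ∫ x, g x ∂μ.withDensity (fun x => ENNReal.ofReal (p x)) = ∫ x, g x * p x ∂μ := by
  rw [integral_withDensity_eq_integral_toReal_smul₀ hp_meas.ennreal_ofReal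
    (.of_forall fun _ => ENNReal.ofReal_lt_top)]
  refine integral_congr_ae (hp.mono fun x hx => ?_)
  simp only [ENNReal.toReal_ofReal hx, smul_eq_mul, mul_comm]

lemma measureReal_withDensity_ofReal (hp_int : Integrable p μ) (hp : 0 ≤ᵐ[μ] p) {s : Set α}
    (hs : MeasurableSet s) :
    (μ.withDensity fun x => ENNReal.ofReal (p x)).real s = ∫ x in s, p x ∂μ := by
  rw [measureReal_def, withDensity_apply _ hs,
    integral_eq_lintegral_of_nonneg_ae (ae_restrict_of_ae hp) hp_int.1.restrict]

end Density

lemma exists_forall_integral_exp_mul_sub_mul_density_le {a b d : ℝ} (ha : 0 ≤ a) (hb : 0 < b)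
    (hd : 0 < d) (y : ℝ) :
    ∃ α₀ > 0, ∀ p : ℝ → ℝ, (∀ x, 0 ≤ p x) → ∫ x, p x = 1 →
      (∀ s, 0 ≤ s → ∫ x in {x | s < |x|}, p x ≤ a * Real.exp (-b * s)) →
      ∀ t, |t| < α₀ → |t| * d ≤ t * ((∫ x, x * p x) - y) →
        ∀ θ, ∫ x, Real.exp (t * (y - x + θ)) * p x ≤ Real.exp (t * θ) * (1 - |t| * d / 2) := by
  obtain ⟨α₀, hα₀, hbound⟩ := exists_forall_integral_exp_mul_sub_le ha hb hd y
  refine ⟨α₀, hα₀, fun p hp hp_one htail t ht hdrift θ => ?_⟩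
  have hp_ae : 0 ≤ᵐ[volume] p := .of_forall hp
  have hp_int : Integrable p := .of_integral_ne_zero (by rw [hp_one]; exact one_ne_zero)
  have := isProbabilityMeasure_withDensity_ofReal hp_ae hp_one
  have hcentred : ∫ x, Real.exp (t * (y - x)) * p x ≤ 1 - |t| * d / 2 := by
    rw [← integral_withDensity_ofReal hp_int.aemeasurable hp_ae]
    refine hbound _ (fun s hs => ?_) t ht ?_
    · rw [measureReal_withDensity_ofReal hp_int hp_ae
        (measurableSet_lt measurable_const (by fun_prop))]
      exact htail s hs
    · rwa [integral_withDensity_ofReal hp_int.aemeasurable hp_ae]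
  calc ∫ x, Real.exp (t * (y - x + θ)) * p x
      = Real.exp (t * θ) * ∫ x, Real.exp (t * (y - x)) * p x := by
        rw [← integral_const_mul]
        congr with x
        rw [mul_add, Real.exp_add]
        ring
    _ ≤ Real.exp (t * θ) * (1 - |t| * d / 2) := by gcongr

lemma post_nonneg {f₁ f₂ : ℝ → ℝ} (hf₁ : ∀ t, 0 ≤ f₁ t) (hf₂ : ∀ t, 0 ≤ f₂ t) (y θ x : ℝ) :
    0 ≤ post f₁ f₂ y θ x := by
  have hjoint (x : ℝ) : 0 ≤ fjoint f₁ f₂ y θ x := mul_nonneg (hf₁ _) (hf₂ _)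
  exact div_nonneg (hjoint x) (integral_nonneg hjoint)

lemma integral_post {f₁ f₂ : ℝ → ℝ} {y θ : ℝ} (hc : cnorm f₁ f₂ y θ ≠ 0) :
    ∫ x, post f₁ f₂ y θ x = 1 := by
  simp only [post, integral_div]
  exact div_self hc

theorem pur_gtip_exponential_moment_bounds_general {p : ℝ → ℝ → ℝ} (y : ℝ)
    (hp : ∀ θ x, 0 ≤ p θ x) (hp_one : ∀ θ, ∫ x, p θ x = 1) {d k : ℝ} (hd : 0 < d) (hk : 0 ≤ k)
    (hPUR : ∀ θ : ℝ, k < |θ| → d ≤ Real.sign θ * ((∫ x, x * p θ x) - y))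
    (hGTIP : ∃ a > (0 : ℝ), ∃ b > (0 : ℝ), ∀ θ : ℝ, ∀ t : ℝ, 0 ≤ t →
      (∫ x in {x : ℝ | t < |x|}, p θ x) ≤ a * Real.exp (-b * t)) :
    ∃ α₀ > (0 : ℝ), ∀ α : ℝ, 0 < α → α < α₀ →
      (∀ θ : ℝ, k < θ →
        (∫ x, Real.exp (α * (y - x + θ)) * p θ x) ≤ Real.exp (α * θ) * (1 - α * d / 2)) ∧
      (∀ θ : ℝ, θ < -k →
        (∫ x, Real.exp (-α * (y - x + θ)) * p θ x) ≤ Real.exp (-α * θ) * (1 - α * d / 2)) := by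
  obtain ⟨a, ha, b, hb, htail⟩ := hGTIP
  obtain ⟨α₀, hα₀, hbound⟩ := exists_forall_integral_exp_mul_sub_mul_density_le ha.le hb hd y
  refine ⟨α₀, hα₀, fun α hα hαα₀ => ⟨fun θ hθ => ?_, fun θ hθ => ?_⟩⟩
  · have hθ_pos : 0 < θ := hk.trans_lt hθ
    have hdrift := hPUR θ (by rwa [abs_of_pos hθ_pos])
    rw [Real.sign_of_pos hθ_pos, one_mul] at hdrift
    have h := hbound (p θ) (hp θ) (hp_one θ) (htail θ) α
    rw [abs_of_pos hα] at h
    exact h hαα₀ (by gcongr) θ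
  · have hθ_neg : θ < 0 := by linarith
    have hdrift := hPUR θ (by rw [abs_of_neg hθ_neg]; linarith)
    rw [Real.sign_of_neg hθ_neg] at hdrift
    have h := hbound (p θ) (hp θ) (hp_one θ) (htail θ) (-α)
    rw [abs_neg, abs_of_pos hα] at h
    exact h hαα₀ (by nlinarith) θ

/-- Lemma on exponential drift, non-centred case: under PUR (with constants
`d, k`) and GTIP of the centred parametrisation, for all sufficiently small `α > 0`,
writing `x̃ = x - θ` (so `y - x̃ = y - x + θ`), the stated exponential moment bounds hold. -/
theorem pur_gtip_exponential_moment_bounds (f₁ f₂ : ℝ → ℝ) (y : ℝ)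
    (hf₁c : Continuous f₁) (hf₂c : Continuous f₂)
    (hf₁pos : ∀ t, 0 < f₁ t) (hf₂pos : ∀ t, 0 < f₂ t)
    (hf₁bdd : ∃ M, ∀ t, f₁ t ≤ M) (hf₂bdd : ∃ M, ∀ t, f₂ t ≤ M)
    (hf₁sym : ∀ t, f₁ (-t) = f₁ t) (hf₂sym : ∀ t, f₂ (-t) = f₂ t)
    (hf₁prob : ∫ t, f₁ t = 1) (hf₂prob : ∫ t, f₂ t = 1)
    (hjint : ∀ θ, Integrable (fun x => fjoint f₁ f₂ y θ x))
    (hcpos : ∀ θ, 0 < cnorm f₁ f₂ y θ)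
    (d k : ℝ) (hd : 0 < d) (hk : 0 < k)
    (hPUR : ∀ θ : ℝ, k < |θ| →
      d ≤ Real.sign θ * ((∫ x, x * post f₁ f₂ y θ x) - y))
    (hGTIP : ∃ a > (0 : ℝ), ∃ b > (0 : ℝ), ∀ θ : ℝ, ∀ t : ℝ, 0 ≤ t →
      (∫ x in {x : ℝ | t < |x|}, post f₁ f₂ y θ x) ≤ a * Real.exp (-b * t)) :
    ∃ α₀ > (0 : ℝ), ∀ α : ℝ, 0 < α → α < α₀ →
      (∀ θ : ℝ, k < θ →
        (∫ x, Real.exp (α * (y - x + θ)) * post f₁ f₂ y θ x) ≤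
          Real.exp (α * θ) * (1 - α * d / 2)) ∧
      (∀ θ : ℝ, θ < -k →
        (∫ x, Real.exp (-α * (y - x + θ)) * post f₁ f₂ y θ x) ≤
          Real.exp (-α * θ) * (1 - α * d / 2)) :=
  pur_gtip_exponential_moment_bounds_general y
    (post_nonneg (fun t => (hf₁pos t).le) (fun t => (hf₂pos t).le) y)
    (fun θ => integral_post (hcpos θ).ne') hd hk.le hPUR hGTIP
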